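/- arXiv:2407.08450 — 2 statements merged into one kernel-verified Lean document; each statement's English description precedes it below -/
import Mathlib

section
/- SDP formulation of eigenvalue optimization over a free spectrahedron: let f = f* ∈ M_d(ℂ⟨x⟩), let L be a monic hermitian linear matrix pencil of size e, and set δ = ⌊(deg f)/2⌋. Then for every μ ∈ ℝ the following two conditions are equivalent, hence the sets they define have the same infimum: (i) f(X) ⪯ μ·I for every k ∈ ℕ and every X ∈ D_L(k) (i.e., the largest eigenvalue of f(X) is at most μ on all of D_L); (ii) there exist finitely many sᵢ ∈ M_d(ℂ⟨x⟩) and vⱼ ∈ ℂ⟨x⟩^{e×d}, all of degree at most δ, with μ·I_d − f = Σᵢ sᵢ*sᵢ + Σⱼ vⱼ*Lvⱼ in M_d(ℂ⟨x⟩). -/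
open scoped Kronecker Matrix ComplexOrder

/-- Noncommutative polynomials: the free `ℂ`-algebra `ℂ⟨x₁,…,xₙ⟩` on `n` generators. -/
abbrev FreeAlg (n : ℕ) := FreeAlgebra ℂ (Fin n)

/-- Evaluation of a matrix of noncommutative polynomials at an `n`-tuple of `k × k` complex
matrices, i.e. the image under `id ⊗ ev_X`. -/
noncomputable def evalM {n k : ℕ} {I J : Type*} (f : Matrix I J (FreeAlg n))
    (X : Fin n → Matrix (Fin k) (Fin k) ℂ) : Matrix (I × Fin k) (J × Fin k) ℂ :=
  fun p q => FreeAlgebra.lift ℂ X (f p.1 q.1) p.2 q.2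

/-- The conjugate-linear involutive anti-automorphism on `ℂ⟨x⟩` fixing the generators:
reverse each word and conjugate each coefficient. -/
noncomputable def nstar {n : ℕ} (a : FreeAlg n) : FreeAlg n :=
  (FreeAlgebra.equivMonoidAlgebraFreeMonoid).symm
    (MonoidAlgebra.ofCoeff (Finsupp.mapDomain FreeMonoid.reverse
      (Finsupp.mapRange (starRingEnd ℂ) (map_zero _)
        ((FreeAlgebra.equivMonoidAlgebraFreeMonoid) a).coeff)))

/-- Conjugate-transpose of a matrix over `ℂ⟨x⟩`. -/
noncomputable def adjM {n : ℕ} {I J : Type*} (f : Matrix I J (FreeAlg n)) :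
    Matrix J I (FreeAlg n) :=
  fun i j => nstar (f j i)

/-- A matrix `f` over `ℂ⟨x⟩` is hermitian if `f = f*`. -/
def IsHermPoly {n : ℕ} {I : Type*} (f : Matrix I I (FreeAlg n)) : Prop :=
  ∀ i j, f i j = nstar (f j i)

/-- Evaluation `L(X) = A₀ ⊗ I + ∑ⱼ Aⱼ ⊗ Xⱼ` of a linear matrix pencil at a matrix tuple. -/
noncomputable def pencilK {n d k : ℕ} (A0 : Matrix (Fin d) (Fin d) ℂ)
    (A : Fin n → Matrix (Fin d) (Fin d) ℂ) (X : Fin n → Matrix (Fin k) (Fin k) ℂ) :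
    Matrix (Fin d × Fin k) (Fin d × Fin k) ℂ :=
  A0 ⊗ₖ (1 : Matrix (Fin k) (Fin k) ℂ) + ∑ j, A j ⊗ₖ X j

/-- Evaluation `L(X) = I ⊗ I + ∑ⱼ Aⱼ ⊗ Xⱼ` of a monic linear matrix pencil. -/
noncomputable def monicK {n d k : ℕ} (A : Fin n → Matrix (Fin d) (Fin d) ℂ)
    (X : Fin n → Matrix (Fin k) (Fin k) ℂ) : Matrix (Fin d × Fin k) (Fin d × Fin k) ℂ :=
  1 + ∑ j, A j ⊗ₖ X j

/-- The monic pencil `I + ∑ⱼ Aⱼ xⱼ` as a matrix of noncommutative polynomials. -/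
noncomputable def monicPoly {n e : ℕ} (A : Fin n → Matrix (Fin e) (Fin e) ℂ) :
    Matrix (Fin e) (Fin e) (FreeAlg n) :=
  1 + ∑ j, (A j).map (fun c => c • FreeAlgebra.ι ℂ j)

/-- The subspace of noncommutative polynomials of degree at most `δ`:
the `ℂ`-linear span of products of at most `δ` generators. -/
noncomputable def degLE (n δ : ℕ) : Submodule ℂ (FreeAlg n) :=
  Submodule.span ℂ
    {a | ∃ w : List (Fin n), w.length ≤ δ ∧ a = (w.map (FreeAlgebra.ι ℂ)).prod}

/-- A matrix over `ℂ⟨x⟩` has degree at most `δ` if each entry does. -/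
def matDegLE {n : ℕ} {I J : Type*} (f : Matrix I J (FreeAlg n)) (δ : ℕ) : Prop :=
  ∀ i j, f i j ∈ degLE n δ

/-- The degree of a matrix of noncommutative polynomials: the least `δ` such that every entry
lies in the span of words of length at most `δ`. -/
noncomputable def matDeg {n : ℕ} {I J : Type*} (f : Matrix I J (FreeAlg n)) : ℕ :=
  sInf {δ | matDegLE f δ}

/-- Evaluation of `f` at the zero scalar tuple, `f(0) ∈ M_d(ℂ)`. -/
noncomputable def evalZero {n : ℕ} {I J : Type*} (f : Matrix I J (FreeAlg n)) :
    Matrix I J ℂ :=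
  f.map (⇑(FreeAlgebra.lift ℂ (fun _ : Fin n => (0 : ℂ))))


namespace EigSDP

/-- The monomial attached to a word. -/
noncomputable def wd {n : ℕ} (w : List (Fin n)) : FreeAlg n := (w.map (FreeAlgebra.ι ℂ)).prod

/-- Coefficient of a word, as a linear functional. -/
noncomputable def coef {n : ℕ} (w : List (Fin n)) : FreeAlg n →ₗ[ℂ] ℂ where
  toFun a := ((FreeAlgebra.equivMonoidAlgebraFreeMonoid) a).coeff (FreeMonoid.ofList w)
  map_add' a b := by simp
  map_smul' c a := by simp

theorem wd_nil {n : ℕ} : wd ([] : List (Fin n)) = 1 := by simp [wd]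

theorem wd_append {n : ℕ} (u w : List (Fin n)) : wd (u ++ w) = wd u * wd w := by simp [wd]

theorem wd_cons {n : ℕ} (x : Fin n) (w : List (Fin n)) :
    wd (x :: w) = FreeAlgebra.ι ℂ x * wd w := by simp [wd]

theorem equiv_wd {n : ℕ} (w : List (Fin n)) :
    FreeAlgebra.equivMonoidAlgebraFreeMonoid (R := ℂ) (wd w)
      = MonoidAlgebra.single (FreeMonoid.ofList w) 1 := by
  induction w with
  | nil => simp [wd_nil, MonoidAlgebra.one_def]
  | cons x w ih =>
    rw [wd_cons, map_mul, ih]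
    simp [FreeAlgebra.equivMonoidAlgebraFreeMonoid, MonoidAlgebra.single_mul_single,
      FreeMonoid.ofList_cons]

open Classical in
theorem coef_wd {n : ℕ} (w u : List (Fin n)) : coef w (wd u) = if u = w then 1 else 0 := by
  simp only [coef, LinearMap.coe_mk, AddHom.coe_mk, equiv_wd, MonoidAlgebra.coeff_single,
    Finsupp.single_apply]
  simp

theorem coef_ext {n : ℕ} {a b : FreeAlg n} (h : ∀ w, coef w a = coef w b) : a = b := by
  apply (FreeAlgebra.equivMonoidAlgebraFreeMonoid (R := ℂ)).injective
  ext w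
  exact h w.toList

theorem span_wd {n : ℕ} : Submodule.span ℂ (Set.range (wd (n := n))) = ⊤ := by
  rw [eq_top_iff]
  rintro a -
  induction a using FreeAlgebra.induction with
  | grade0 r =>
    rw [Algebra.algebraMap_eq_smul_one]
    exact Submodule.smul_mem _ _ (Submodule.subset_span ⟨[], wd_nil⟩)
  | grade1 x => exact Submodule.subset_span ⟨[x], by simp [wd]⟩
  | add a b ha hb => exact Submodule.add_mem _ ha hb
  | mul a b ha hb =>
    have := Submodule.mul_mem_mul ha hb
    rw [Submodule.span_mul_span] at this
    refine Submodule.span_mono ?_ this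
    rintro _ ⟨_, ⟨u, rfl⟩, _, ⟨w, rfl⟩, rfl⟩
    exact ⟨u ++ w, wd_append u w⟩

theorem word_induction {n : ℕ} {p : FreeAlg n → Prop} (hw : ∀ w, p (wd w))
    (h0 : p 0) (hadd : ∀ a b, p a → p b → p (a + b)) (hs : ∀ (c : ℂ) a, p a → p (c • a))
    (a : FreeAlg n) : p a := by
  have : a ∈ Submodule.span ℂ (Set.range (wd (n := n))) := by rw [span_wd]; trivial
  induction this using Submodule.span_induction with
  | mem x hx => obtain ⟨w, rfl⟩ := hx; exact hw w
  | zero => exact h0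
  | add x y _ _ hx hy => exact hadd _ _ hx hy
  | smul c x _ hx => exact hs _ _ hx

theorem coef_nstar {n : ℕ} (w : List (Fin n)) (a : FreeAlg n) :
    coef w (nstar a) = (starRingEnd ℂ) (coef w.reverse a) := by
  simp only [coef, nstar, LinearMap.coe_mk, AddHom.coe_mk, AlgEquiv.apply_symm_apply]
  have : FreeMonoid.ofList w = FreeMonoid.reverse (FreeMonoid.ofList w.reverse) := by
    exact (List.reverse_reverse w).symm
  rw [this, Finsupp.mapDomain_apply]
  · rfl
  · exact List.reverse_injective

theorem nstar_add {n : ℕ} (a b : FreeAlg n) : nstar (a + b) = nstar a + nstar b :=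
  coef_ext fun w => by simp [coef_nstar]

theorem nstar_smul {n : ℕ} (c : ℂ) (a : FreeAlg n) :
    nstar (c • a) = (starRingEnd ℂ c) • nstar a :=
  coef_ext fun w => by simp [coef_nstar]

theorem nstar_zero {n : ℕ} : nstar (0 : FreeAlg n) = 0 :=
  coef_ext fun w => by simp [coef_nstar]

theorem nstar_sub {n : ℕ} (a b : FreeAlg n) : nstar (a - b) = nstar a - nstar b :=
  coef_ext fun w => by simp [coef_nstar]

theorem nstar_nstar {n : ℕ} (a : FreeAlg n) : nstar (nstar a) = a :=
  coef_ext fun w => by simp [coef_nstar]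

theorem nstar_sum {n : ℕ} {ι : Type*} (s : Finset ι) (a : ι → FreeAlg n) :
    nstar (∑ i ∈ s, a i) = ∑ i ∈ s, nstar (a i) :=
  coef_ext fun w => by simp [coef_nstar]

theorem nstar_wd {n : ℕ} (w : List (Fin n)) : nstar (wd w) = wd w.reverse :=
  coef_ext fun u => by
    simp only [coef_nstar, coef_wd, apply_ite (starRingEnd ℂ), map_one, map_zero]
    congr 1
    rw [eq_iff_iff]
    constructor
    · rintro rfl; simp
    · rintro rfl; simp

theorem nstar_one {n : ℕ} : nstar (1 : FreeAlg n) = 1 := by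
  rw [← wd_nil, nstar_wd]; rfl

theorem nstar_ι {n : ℕ} (x : Fin n) : nstar (FreeAlgebra.ι ℂ x) = FreeAlgebra.ι ℂ x := by
  have := nstar_wd [x]
  simpa [wd] using this

theorem nstar_mul {n : ℕ} (a b : FreeAlg n) : nstar (a * b) = nstar b * nstar a := by
  induction a using word_induction with
  | hw u =>
    induction b using word_induction with
    | hw w => simp only [← wd_append, nstar_wd, List.reverse_append]
    | h0 => simp [nstar_zero]
    | hadd a b ha hb => rw [mul_add, nstar_add, ha, hb, nstar_add, add_mul]
    | hs c a ha => rw [mul_smul_comm, nstar_smul, ha, nstar_smul, smul_mul_assoc]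
  | h0 => simp [nstar_zero]
  | hadd a b ha hb => rw [add_mul, nstar_add, ha, hb, nstar_add, mul_add]
  | hs c a ha => rw [smul_mul_assoc, nstar_smul, ha, nstar_smul, mul_smul_comm]

/-! ### Matrices -/

theorem adjM_add {n : ℕ} {I J : Type*} (p q : Matrix I J (FreeAlg n)) :
    adjM (p + q) = adjM p + adjM q := by
  ext i j; simp [adjM, nstar_add]

theorem adjM_sub {n : ℕ} {I J : Type*} (p q : Matrix I J (FreeAlg n)) :
    adjM (p - q) = adjM p - adjM q := by
  ext i j; simp [adjM, nstar_sub]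

theorem adjM_smul {n : ℕ} {I J : Type*} (c : ℂ) (p : Matrix I J (FreeAlg n)) :
    adjM (c • p) = (starRingEnd ℂ c) • adjM p := by
  ext i j; simp [adjM, nstar_smul]

theorem adjM_adjM {n : ℕ} {I J : Type*} (p : Matrix I J (FreeAlg n)) :
    adjM (adjM p) = p := by
  ext i j; simp [adjM, nstar_nstar]

theorem adjM_mul {n : ℕ} {I J K : Type*} [Fintype J] (p : Matrix I J (FreeAlg n))
    (q : Matrix J K (FreeAlg n)) : adjM (p * q) = adjM q * adjM p := by
  ext i j; simp [adjM, Matrix.mul_apply, nstar_sum, nstar_mul]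

theorem adjM_one {n d : ℕ} : adjM (1 : Matrix (Fin d) (Fin d) (FreeAlg n)) = 1 := by
  ext i j
  by_cases h : i = j
  · subst h; simp [adjM, nstar_one]
  · simp [adjM, h, Ne.symm h, nstar_zero]

theorem monicPoly_apply {n e : ℕ} (A : Fin n → Matrix (Fin e) (Fin e) ℂ) (k l : Fin e) :
    monicPoly A k l = (if k = l then (1 : ℂ) else 0) • wd [] + ∑ x, A x k l • wd [x] := by
  simp only [monicPoly, Matrix.add_apply, Matrix.one_apply, Matrix.sum_apply, Matrix.map_apply,
    wd_nil]
  congr 1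
  · split_ifs <;> simp
  · simp [wd]

theorem adjM_monicPoly {n e : ℕ} (A : Fin n → Matrix (Fin e) (Fin e) ℂ)
    (hA : ∀ j, (A j).IsHermitian) : adjM (monicPoly A) = monicPoly A := by
  ext k l
  simp only [adjM, monicPoly_apply, nstar_add, nstar_sum, nstar_smul, nstar_wd]
  congr 1
  · by_cases h : k = l
    · simp [h]
    · simp [h, Ne.symm h]
  · refine Finset.sum_congr rfl fun x _ => ?_
    congr 1
    exact (hA x).apply k l

/-! ### Evaluation -/

theorem evalM_add {n k : ℕ} {I J : Type*} (p q : Matrix I J (FreeAlg n))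
    (X : Fin n → Matrix (Fin k) (Fin k) ℂ) : evalM (p + q) X = evalM p X + evalM q X := by
  ext a b; simp [evalM]

theorem evalM_sub {n k : ℕ} {I J : Type*} (p q : Matrix I J (FreeAlg n))
    (X : Fin n → Matrix (Fin k) (Fin k) ℂ) : evalM (p - q) X = evalM p X - evalM q X := by
  ext a b; simp [evalM]

theorem evalM_sum {n k : ℕ} {I J ι : Type*} (s : Finset ι) (p : ι → Matrix I J (FreeAlg n))
    (X : Fin n → Matrix (Fin k) (Fin k) ℂ) :
    evalM (∑ i ∈ s, p i) X = ∑ i ∈ s, evalM (p i) X := by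
  ext a b; simp [evalM, Matrix.sum_apply]

theorem evalM_smul {n k : ℕ} {I J : Type*} (c : ℂ) (p : Matrix I J (FreeAlg n))
    (X : Fin n → Matrix (Fin k) (Fin k) ℂ) : evalM (c • p) X = c • evalM p X := by
  ext a b; simp [evalM]

theorem evalM_one {n k d : ℕ} (X : Fin n → Matrix (Fin k) (Fin k) ℂ) :
    evalM (1 : Matrix (Fin d) (Fin d) (FreeAlg n)) X = 1 := by
  ext ⟨a, b⟩ ⟨a', b'⟩
  by_cases h : a = a' <;> simp [evalM, Matrix.one_apply, h]

theorem evalM_mul {n k : ℕ} {I J K : Type*} [Fintype J] (p : Matrix I J (FreeAlg n))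
    (q : Matrix J K (FreeAlg n)) (X : Fin n → Matrix (Fin k) (Fin k) ℂ) :
    evalM (p * q) X = evalM p X * evalM q X := by
  ext ⟨a, b⟩ ⟨a', b'⟩
  simp [evalM, Matrix.mul_apply, Matrix.sum_apply, Fintype.sum_prod_type]

theorem lift_nstar {n k : ℕ} (X : Fin n → Matrix (Fin k) (Fin k) ℂ)
    (hX : ∀ j, (X j).IsHermitian) (a : FreeAlg n) :
    FreeAlgebra.lift ℂ X (nstar a) = (FreeAlgebra.lift ℂ X a)ᴴ := by
  induction a using word_induction with
  | hw w =>
    rw [nstar_wd]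
    induction w with
    | nil => simp [wd]
    | cons x w ih =>
      rw [List.reverse_cons, wd_append, map_mul, ih, wd_cons x w, map_mul, Matrix.conjTranspose_mul]
      simp [wd, (hX x).eq]
  | h0 => simp [nstar_zero]
  | hadd a b ha hb => simp [nstar_add, ha, hb]
  | hs c a ha => simp [nstar_smul, ha, Matrix.conjTranspose_smul]

theorem evalM_adjM {n k : ℕ} {I J : Type*} (p : Matrix I J (FreeAlg n))
    (X : Fin n → Matrix (Fin k) (Fin k) ℂ) (hX : ∀ j, (X j).IsHermitian) :
    evalM (adjM p) X = (evalM p X)ᴴ := by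
  ext ⟨a, b⟩ ⟨a', b'⟩
  simp [evalM, adjM, lift_nstar X hX]

theorem evalM_monicPoly {n k e : ℕ} (A : Fin n → Matrix (Fin e) (Fin e) ℂ)
    (X : Fin n → Matrix (Fin k) (Fin k) ℂ) : evalM (monicPoly A) X = monicK A X := by
  rw [monicPoly, monicK, evalM_add, evalM_one, evalM_sum]
  congr 1
  refine Finset.sum_congr rfl fun x _ => ?_
  ext ⟨a, b⟩ ⟨a', b'⟩
  simp [evalM]

theorem easy_direction {n d e k : ℕ} (A : Fin n → Matrix (Fin e) (Fin e) ℂ)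
    (g : Matrix (Fin d) (Fin d) (FreeAlg n)) {M N : ℕ}
    (s : Fin M → Matrix (Fin d) (Fin d) (FreeAlg n))
    (v : Fin N → Matrix (Fin e) (Fin d) (FreeAlg n))
    (hg : g = ∑ i, adjM (s i) * s i + ∑ j, adjM (v j) * monicPoly A * v j)
    (X : Fin n → Matrix (Fin k) (Fin k) ℂ) (hX : ∀ j, (X j).IsHermitian)
    (hL : (monicK A X).PosSemidef) : (evalM g X).PosSemidef := by
  rw [hg, evalM_add, evalM_sum, evalM_sum]
  refine Matrix.PosSemidef.add ?_ ?_
  · refine Matrix.posSemidef_sum _ fun i _ => ?_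
    rw [evalM_mul, evalM_adjM _ _ hX]
    exact Matrix.posSemidef_conjTranspose_mul_self _
  · refine Matrix.posSemidef_sum _ fun i _ => ?_
    rw [evalM_mul, evalM_mul, evalM_adjM _ _ hX, evalM_monicPoly]
    exact hL.conjTranspose_mul_mul_same _


/-- Words of length at most `δ`. -/
abbrev Wd (n δ : ℕ) := {w : List (Fin n) // w.length ≤ δ}

noncomputable instance instFintypeWd (n δ : ℕ) : Fintype (Wd n δ) :=
  (List.finite_length_le (Fin n) δ).fintype

/-- Matrix of polynomials of degree at most `δ` with prescribed coefficients. -/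
noncomputable def PM {n δ : ℕ} {I J : Type*} (c : I → J → Wd n δ → ℂ) : Matrix I J (FreeAlg n) :=
  fun k i => ∑ w, c k i w • wd w.1

theorem PM_smul {n δ : ℕ} {I J : Type*} (t : ℂ) (c : I → J → Wd n δ → ℂ) :
    PM (t • c) = t • PM c := by
  ext k i
  simp [PM, Finset.smul_sum, smul_smul]

theorem wd_mem_degLE {n N : ℕ} (w : List (Fin n)) (hw : w.length ≤ N) : wd w ∈ degLE n N :=
  Submodule.subset_span ⟨w, hw, rfl⟩

theorem matDegLE_PM {n δ : ℕ} {I J : Type*} (c : I → J → Wd n δ → ℂ) : matDegLE (PM c) δ :=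
  fun _ _ => Submodule.sum_mem _ fun w _ => Submodule.smul_mem _ _ (wd_mem_degLE _ w.2)

/-- The hermitian square `v* L v` of the polynomial matrix with coefficients `c`. -/
noncomputable def sqT {n δ d e : ℕ} (A : Fin n → Matrix (Fin e) (Fin e) ℂ)
    (c : Fin e → Fin d → Wd n δ → ℂ) : Matrix (Fin d) (Fin d) (FreeAlg n) :=
  adjM (PM c) * monicPoly A * PM c

theorem sqT_apply {n δ d e : ℕ} (A : Fin n → Matrix (Fin e) (Fin e) ℂ)
    (c : Fin e → Fin d → Wd n δ → ℂ) (i j : Fin d) :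
    sqT A c i j = ∑ k, ∑ l, ∑ u : Wd n δ, ∑ w : Wd n δ,
      ((starRingEnd ℂ) (c k i u) * c l j w) •
        ((if k = l then (1 : ℂ) else 0) • wd (u.1.reverse ++ w.1)
          + ∑ x, A x k l • wd (u.1.reverse ++ x :: w.1)) := by
  have key : ∀ k l (u w : Wd n δ), wd u.1.reverse * monicPoly A k l * wd w.1
      = (if k = l then (1 : ℂ) else 0) • wd (u.1.reverse ++ w.1)
          + ∑ x, A x k l • wd (u.1.reverse ++ x :: w.1) := by
    intro k l u w
    rw [monicPoly_apply, mul_add, add_mul, Finset.mul_sum, Finset.sum_mul, mul_smul_comm,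
      smul_mul_assoc, ← wd_append, ← wd_append, List.append_nil]
    congr 1
    refine Finset.sum_congr rfl fun x _ => ?_
    rw [mul_smul_comm, smul_mul_assoc, ← wd_append, ← wd_append, List.append_assoc]
    rfl
  simp only [← key]
  simp only [sqT, Matrix.mul_apply, Finset.sum_mul]
  rw [Finset.sum_comm]
  refine Finset.sum_congr rfl fun k _ => Finset.sum_congr rfl fun l _ => ?_
  simp only [adjM, PM, nstar_sum, nstar_smul, nstar_wd, Finset.sum_mul]
  refine Finset.sum_congr rfl fun u _ => ?_
  rw [Finset.mul_sum]
  refine Finset.sum_congr rfl fun w _ => ?_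
  rw [smul_mul_assoc, smul_mul_assoc, mul_smul_comm, smul_smul]

theorem sqT_smul {n δ d e : ℕ} (A : Fin n → Matrix (Fin e) (Fin e) ℂ)
    (t : ℝ) (c : Fin e → Fin d → Wd n δ → ℂ) :
    sqT A ((t : ℂ) • c) = ((t ^ 2 : ℝ) : ℂ) • sqT A c := by
  simp only [sqT, PM_smul, adjM_smul, Complex.conj_ofReal, Matrix.smul_mul, Matrix.mul_smul,
    smul_smul]
  congr 1
  push_cast
  ring

theorem adjM_sqT {n δ d e : ℕ} (A : Fin n → Matrix (Fin e) (Fin e) ℂ)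
    (hA : ∀ j, (A j).IsHermitian) (c : Fin e → Fin d → Wd n δ → ℂ) :
    adjM (sqT A c) = sqT A c := by
  simp only [sqT, adjM_mul, adjM_adjM, adjM_monicPoly A hA, Matrix.mul_assoc]

theorem matDegLE_sqT {n δ d e : ℕ} (A : Fin n → Matrix (Fin e) (Fin e) ℂ)
    (c : Fin e → Fin d → Wd n δ → ℂ) : matDegLE (sqT A c) (2 * δ + 1) := by
  intro i j
  rw [sqT_apply]
  refine Submodule.sum_mem _ fun k _ => Submodule.sum_mem _ fun l _ => Submodule.sum_mem _ fun u _ =>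
    Submodule.sum_mem _ fun w _ => Submodule.smul_mem _ _ (Submodule.add_mem _ ?_ ?_)
  · refine Submodule.smul_mem _ _ (wd_mem_degLE _ ?_)
    have := u.2
    have := w.2
    simp only [List.length_append, List.length_reverse]
    omega
  · refine Submodule.sum_mem _ fun x _ => Submodule.smul_mem _ _ (wd_mem_degLE _ ?_)
    have := u.2
    have := w.2
    simp only [List.length_append, List.length_reverse, List.length_cons]
    omega

theorem coef_of_degLE {n N : ℕ} {a : FreeAlg n} (ha : a ∈ degLE n N) (w : List (Fin n))
    (hw : N < w.length) : coef w a = 0 := by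
  induction ha using Submodule.span_induction with
  | mem x hx =>
    obtain ⟨u, hu, rfl⟩ := hx
    change coef w (wd u) = 0
    rw [coef_wd, if_neg]
    rintro rfl
    omega
  | zero => simp
  | add x y _ _ hx hy => simp [hx, hy]
  | smul c x _ hx => simp [hx]

/-- If all coefficients at words shorter than `u` vanish, the `rev u ++ u` coefficient
of a diagonal entry of `v* L v` is a sum of squares. -/
theorem coef_sqT {n δ d e : ℕ} (A : Fin n → Matrix (Fin e) (Fin e) ℂ)
    (c : Fin e → Fin d → Wd n δ → ℂ) (u : Wd n δ) (i : Fin d)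
    (hc : ∀ k i (w : Wd n δ), w.1.length < u.1.length → c k i w = 0) :
    coef (u.1.reverse ++ u.1) (sqT A c i i) = ((∑ k, ‖c k i u‖ ^ 2 : ℝ) : ℂ) := by
  classical
  have key : ∀ k l (a b : Wd n δ),
      coef (u.1.reverse ++ u.1) (((starRingEnd ℂ) (c k i a) * c l i b) •
        ((if k = l then (1 : ℂ) else 0) • wd (a.1.reverse ++ b.1)
          + ∑ x, A x k l • wd (a.1.reverse ++ x :: b.1)))
      = if l = k then (if a = u then (if b = u then ((‖c k i u‖ ^ 2 : ℝ) : ℂ) else 0) else 0)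
          else 0 := by
    intro k l a b
    by_cases ha : a.1.length < u.1.length
    · have hau : a ≠ u := by rintro rfl; omega
      simp [hc k i a ha, hau]
    by_cases hb : b.1.length < u.1.length
    · have hbu : b ≠ u := by rintro rfl; omega
      simp [hc l i b hb, hbu]
    simp only [map_smul, map_add, map_sum, coef_wd, smul_eq_mul]
    have h1 : ∀ x, ¬ (a.1.reverse ++ x :: b.1 = u.1.reverse ++ u.1) := by
      intro x h
      have := congrArg List.length h
      simp only [List.length_append, List.length_reverse, List.length_cons] at this
      omega
    have h2 : (a.1.reverse ++ b.1 = u.1.reverse ++ u.1) ↔ (a = u ∧ b = u) := by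
      constructor
      · intro h
        have hl := congrArg List.length h
        simp only [List.length_append, List.length_reverse] at hl
        obtain ⟨h3, h4⟩ := List.append_inj h (by simp only [List.length_reverse]; omega)
        exact ⟨Subtype.ext (List.reverse_injective h3), Subtype.ext h4⟩
      · rintro ⟨rfl, rfl⟩; rfl
    simp only [h1, h2, if_false, mul_zero, Finset.sum_const_zero, add_zero]
    by_cases hkl : l = k
    · subst hkl
      by_cases hau : a = u
      · by_cases hbu : b = u
        · subst hau; subst hbu
          simp only [and_self, if_true, mul_one]
          rw [mul_comm, Complex.mul_conj, Complex.normSq_eq_norm_sq]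
        · simp [hau, hbu]
      · simp [hau]
    · simp [hkl, Ne.symm hkl]
  rw [sqT_apply]
  simp only [map_sum, key]
  simp


/-- The coefficient space parametrizing one term `v* L v + s* s`. -/
abbrev V (n δ d e : ℕ) := (Fin e → Fin d → Wd n δ → ℂ) × (Fin d → Fin d → Wd n δ → ℂ)

/-- One term of the certificate. -/
noncomputable def sq {n δ d e : ℕ} (A : Fin n → Matrix (Fin e) (Fin e) ℂ)
    (c : V n δ d e) : Matrix (Fin d) (Fin d) (FreeAlg n) :=
  sqT A c.1 + sqT 0 c.2

theorem sq_smul {n δ d e : ℕ} (A : Fin n → Matrix (Fin e) (Fin e) ℂ)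
    (t : ℝ) (c : V n δ d e) : sq A ((t : ℂ) • c) = ((t ^ 2 : ℝ) : ℂ) • sq A c := by
  simp only [sq, Prod.smul_fst, Prod.smul_snd, sqT_smul, smul_add]

theorem sq_zero {n δ d e : ℕ} (A : Fin n → Matrix (Fin e) (Fin e) ℂ) :
    sq A (0 : V n δ d e) = 0 := by
  have := sq_smul A 0 (0 : V n δ d e)
  simpa using this

/-- The cone of certificates. -/
def Cone {n : ℕ} (δ d : ℕ) {e : ℕ} (A : Fin n → Matrix (Fin e) (Fin e) ℂ) :
    Set (Matrix (Fin d) (Fin d) (FreeAlg n)) :=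
  {p | ∃ l : List (V n δ d e), p = (l.map (sq A)).sum}

theorem cone_add {n δ d e : ℕ} {A : Fin n → Matrix (Fin e) (Fin e) ℂ}
    {p q : Matrix (Fin d) (Fin d) (FreeAlg n)} (hp : p ∈ Cone δ d A) (hq : q ∈ Cone δ d A) :
    p + q ∈ Cone δ d A := by
  obtain ⟨l, rfl⟩ := hp
  obtain ⟨m, rfl⟩ := hq
  exact ⟨l ++ m, by simp⟩

theorem cone_smul {n δ d e : ℕ} {A : Fin n → Matrix (Fin e) (Fin e) ℂ}
    {p : Matrix (Fin d) (Fin d) (FreeAlg n)} (hp : p ∈ Cone δ d A) (t : ℝ) (ht : 0 ≤ t) :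
    (t : ℂ) • p ∈ Cone δ d A := by
  obtain ⟨l, rfl⟩ := hp
  refine ⟨l.map (fun c => ((Real.sqrt t : ℝ) : ℂ) • c), ?_⟩
  rw [List.smul_sum, List.map_map, List.map_map]
  congr 1
  refine List.map_congr_left fun c _ => ?_
  simp only [Function.comp, sq_smul, Real.sq_sqrt ht]

theorem matDegLE_sq {n δ d e : ℕ} (A : Fin n → Matrix (Fin e) (Fin e) ℂ)
    (c : V n δ d e) : matDegLE (sq A c) (2 * δ + 1) :=
  fun i j => Submodule.add_mem _ (matDegLE_sqT A c.1 i j) (matDegLE_sqT 0 c.2 i j)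

theorem matDegLE_cone {n δ d e : ℕ} {A : Fin n → Matrix (Fin e) (Fin e) ℂ}
    {p : Matrix (Fin d) (Fin d) (FreeAlg n)} (hp : p ∈ Cone δ d A) :
    matDegLE p (2 * δ + 1) := by
  obtain ⟨l, rfl⟩ := hp
  induction l with
  | nil => intro i j; simp
  | cons c l ih =>
    intro i j
    rw [List.map_cons, List.sum_cons]
    exact Submodule.add_mem _ (matDegLE_sq A c i j) (ih i j)

theorem all_zero {n δ d e : ℕ} {A : Fin n → Matrix (Fin e) (Fin e) ℂ}
    (l : List (V n δ d e)) (hl : (l.map (sq A)).sum = 0) : ∀ c ∈ l, c = 0 := by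
  have main : ∀ N : ℕ, ∀ c ∈ l, ∀ w : Wd n δ, w.1.length = N → ∀ i,
      (∀ k, c.1 k i w = 0) ∧ (∀ k, c.2 k i w = 0) := by
    intro N
    induction N using Nat.strong_induction_on with
    | _ N ih =>
      intro c hc u hu i
      have hco : ∀ c ∈ l, coef (u.1.reverse ++ u.1) (sq A c i i)
          = ((∑ k, ‖c.1 k i u‖ ^ 2 + ∑ k, ‖c.2 k i u‖ ^ 2 : ℝ) : ℂ) := by
        intro c hc
        rw [sq, Matrix.add_apply, map_add, coef_sqT A c.1 u i, coef_sqT 0 c.2 u i,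
          Complex.ofReal_add]
        · intro k i w hw
          exact (ih _ (hu ▸ hw) c hc w rfl i).2 k
        · intro k i w hw
          exact (ih _ (hu ▸ hw) c hc w rfl i).1 k
      have hsum : coef (u.1.reverse ++ u.1) ((l.map (sq A)).sum i i)
          = (((l.map fun c => ∑ k, ‖c.1 k i u‖ ^ 2 + ∑ k, ‖c.2 k i u‖ ^ 2).sum : ℝ) : ℂ) := by
        clear hl ih hc
        induction l with
        | nil => simp
        | cons a l ihl =>
          rw [List.map_cons, List.sum_cons, Matrix.add_apply, map_add, hco a (by simp),
            ihl (fun c hc => hco c (by simp [hc])), List.map_cons, List.sum_cons,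
            Complex.ofReal_add _ (List.sum _)]
      rw [hl] at hsum
      simp only [Matrix.zero_apply, map_zero] at hsum
      have hs0 := (Complex.ofReal_eq_zero.mp hsum.symm)
      have hz : ∑ k, ‖c.1 k i u‖ ^ 2 + ∑ k, ‖c.2 k i u‖ ^ 2 = 0 := by
        have hnn : ∀ x ∈ l.map (fun c : V n δ d e =>
            ∑ k, ‖c.1 k i u‖ ^ 2 + ∑ k, ‖c.2 k i u‖ ^ 2), (0 : ℝ) ≤ x := by
          intro x hx
          obtain ⟨c, _, rfl⟩ := List.mem_map.mp hx
          positivity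
        have := List.single_le_sum hnn _ (List.mem_map.mpr ⟨c, hc, rfl⟩)
        rw [hs0] at this
        exact le_antisymm this (by positivity)
      have h1 : 0 ≤ ∑ k, ‖c.1 k i u‖ ^ 2 := by positivity
      have h2 : 0 ≤ ∑ k, ‖c.2 k i u‖ ^ 2 := by positivity
      have h3 : ∑ k, ‖c.1 k i u‖ ^ 2 = 0 := by linarith
      have h4 : ∑ k, ‖c.2 k i u‖ ^ 2 = 0 := by linarith
      rw [Finset.sum_eq_zero_iff_of_nonneg (fun _ _ => by positivity)] at h3 h4
      constructor
      · intro k; simpa using h3 k (Finset.mem_univ _)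
      · intro k; simpa using h4 k (Finset.mem_univ _)
  intro c hc
  refine Prod.ext ?_ ?_
  · funext k i w; exact (main _ c hc w rfl i).1 k
  · funext k i w; exact (main _ c hc w rfl i).2 k

theorem sq_ne_zero {n δ d e : ℕ} (A : Fin n → Matrix (Fin e) (Fin e) ℂ)
    {c : V n δ d e} (hc : c ≠ 0) : sq A c ≠ 0 := fun h =>
  hc (all_zero (A := A) [c] (by simpa using h) c (by simp))

theorem cone_pointed {n δ d e : ℕ} {A : Fin n → Matrix (Fin e) (Fin e) ℂ}
    {p q : Matrix (Fin d) (Fin d) (FreeAlg n)} (hp : p ∈ Cone δ d A) (hq : q ∈ Cone δ d A)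
    (h : p + q = 0) : p = 0 := by
  obtain ⟨l, rfl⟩ := hp
  obtain ⟨m, rfl⟩ := hq
  have := all_zero (A := A) (l ++ m) (by simpa using h)
  apply List.sum_eq_zero
  intro x hx
  obtain ⟨c, hc, rfl⟩ := List.mem_map.mp hx
  rw [this c (by simp [hc]), sq_zero]

theorem isCompact_convexHull' {E : Type*} [NormedAddCommGroup E] [NormedSpace ℝ E]
    [FiniteDimensional ℝ E] {s : Set E} (hs : IsCompact s) : IsCompact (convexHull ℝ s) := by
  rcases s.eq_empty_or_nonempty with rfl | ⟨x0, hx0⟩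
  · simp
  set D := Module.finrank ℝ E + 1 with hD
  have hK : IsCompact ((stdSimplex ℝ (Fin D)) ×ˢ (Set.univ.pi fun _ : Fin D => s)) :=
    (isCompact_stdSimplex ℝ (Fin D)).prod (isCompact_univ_pi fun _ => hs)
  have hF : Continuous (fun q : (Fin D → ℝ) × (Fin D → E) => ∑ i, q.1 i • q.2 i) := by
    fun_prop
  convert hK.image hF using 1
  apply Set.Subset.antisymm
  · intro x hx
    obtain ⟨ι, _, z, w, hz, hind, hw, hw1, hx⟩ := eq_pos_convex_span_of_mem_convexHull hx
    have hcard : Fintype.card ι ≤ Fintype.card (Fin D) := by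
      rw [Fintype.card_fin]
      refine hind.card_le_finrank_succ.trans ?_
      exact Nat.succ_le_succ (Submodule.finrank_le _)
    obtain ⟨φ⟩ := Function.Embedding.nonempty_of_card_le hcard
    refine ⟨(Function.extend φ w 0, Function.extend φ z (fun _ => x0)), ⟨⟨?_, ?_⟩, ?_⟩, ?_⟩
    · intro a
      by_cases ha : ∃ b, φ b = a
      · obtain ⟨b, rfl⟩ := ha
        simp only [φ.injective.extend_apply]; exact (hw b).le
      · simp [Function.extend_apply' _ _ _ ha]
    · rw [← hw1]
      symm
      refine Finset.sum_of_injOn φ φ.injective.injOn (by simp) ?_ ?_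
      · intro a _ ha
        exact Function.extend_apply' _ _ _ (by simpa using ha)
      · intro a _; simp [φ.injective.extend_apply]
    · intro a _
      by_cases ha : ∃ b, φ b = a
      · obtain ⟨b, rfl⟩ := ha
        simp only [φ.injective.extend_apply]; exact hz ⟨b, rfl⟩
      · simp only [Function.extend_apply' _ _ _ ha]; exact hx0
    · simp only
      rw [← hx]
      symm
      refine Finset.sum_of_injOn φ φ.injective.injOn (by simp) ?_ ?_
      · intro a _ ha
        rw [Function.extend_apply' _ _ _ (by simpa using ha)]; simp
      · intro a _; simp [φ.injective.extend_apply]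
  · rintro _ ⟨⟨w, z⟩, ⟨⟨hw0, hw1⟩, hz⟩, rfl⟩
    exact (convex_convexHull ℝ s).sum_mem (fun i _ => hw0 i) hw1
      (fun i _ => subset_convexHull ℝ s (hz i trivial))


/-- The finite-dimensional space of coefficients in degree at most `N`. -/
abbrev E (n N d : ℕ) := Fin d → Fin d → Wd n N → ℂ

/-- Coefficient map. -/
noncomputable def kap {n d : ℕ} (N : ℕ) : Matrix (Fin d) (Fin d) (FreeAlg n) →ₗ[ℂ] E n N d where
  toFun p := fun i j w => coef w.1 (p i j)
  map_add' p q := by funext i j w; simp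
  map_smul' c p := by funext i j w; simp

theorem kap_eq_zero {n d N : ℕ} {p : Matrix (Fin d) (Fin d) (FreeAlg n)} (hp : matDegLE p N)
    (h : kap N p = 0) : p = 0 := by
  ext i j
  refine coef_ext fun w => ?_
  simp only [Matrix.zero_apply, map_zero]
  by_cases hw : w.length ≤ N
  · exact congrFun (congrFun (congrFun h i) j) ⟨w, hw⟩
  · exact coef_of_degLE (hp i j) w (by omega)

theorem continuous_kap_sqT {n δ d e N : ℕ} (A : Fin n → Matrix (Fin e) (Fin e) ℂ) :
    Continuous fun c : Fin e → Fin d → Wd n δ → ℂ => kap N (sqT A c) := by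
  refine continuous_pi fun i => continuous_pi fun j => continuous_pi fun m => ?_
  simp only [kap, LinearMap.coe_mk, AddHom.coe_mk, sqT_apply, map_sum, map_smul, smul_eq_mul]
  refine continuous_finsetSum _ fun k _ => continuous_finsetSum _ fun l _ =>
    continuous_finsetSum _ fun u _ => continuous_finsetSum _ fun w _ => ?_
  refine Continuous.mul (Continuous.mul ?_ ?_) continuous_const
  · exact Complex.continuous_conj.comp (by fun_prop)
  · fun_prop

theorem continuous_kap_sq {n δ d e N : ℕ} (A : Fin n → Matrix (Fin e) (Fin e) ℂ) :
    Continuous fun c : V n δ d e => kap N (sq A c) := by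
  simp only [sq, map_add]
  exact ((continuous_kap_sqT A).comp continuous_fst).add
    ((continuous_kap_sqT 0).comp continuous_snd)

/-- Auxiliary convex set. -/
def SS {n : ℕ} (δ d : ℕ) {e : ℕ} (A : Fin n → Matrix (Fin e) (Fin e) ℂ)
    (g : Matrix (Fin d) (Fin d) (FreeAlg n)) : Set (E n (2 * δ + 1) d) :=
  {y | ∃ p ∈ Cone δ d A, ∃ c : ℝ, 0 ≤ c ∧ (p ≠ 0 ∨ 0 < c) ∧ y = kap (2 * δ + 1) (p - (c : ℂ) • g)}

theorem zero_mem_cone {n δ d e : ℕ} {A : Fin n → Matrix (Fin e) (Fin e) ℂ} :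
    (0 : Matrix (Fin d) (Fin d) (FreeAlg n)) ∈ Cone δ d A := ⟨[], by simp⟩

theorem convex_SS {n δ d e : ℕ} (A : Fin n → Matrix (Fin e) (Fin e) ℂ)
    (g : Matrix (Fin d) (Fin d) (FreeAlg n)) : Convex ℝ (SS δ d A g) := by
  rintro _ ⟨p, hp, c, hc, hpc, rfl⟩ _ ⟨q, hq, c', hc', hqc, rfl⟩ a b ha hb hab
  have hap := cone_smul hp a ha
  have hbq := cone_smul hq b hb
  refine ⟨(a : ℂ) • p + (b : ℂ) • q, cone_add hap hbq, a * c + b * c', by positivity, ?_, ?_⟩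
  · by_contra hcon
    push Not at hcon
    obtain ⟨h1, h2⟩ := hcon
    have h3 : 0 ≤ a * c := by positivity
    have h4 : 0 ≤ b * c' := by positivity
    have h5 : a * c = 0 := by linarith
    have h6 : b * c' = 0 := by linarith
    have hp0 := cone_pointed hap hbq h1
    have hq0 := cone_pointed hbq hap (by rw [add_comm]; exact h1)
    rcases ha.eq_or_lt with ha0 | ha0
    · have hb1 : b = 1 := by linarith
      subst hb1
      simp only [Complex.ofReal_one, one_smul] at hq0
      rcases hqc with h | h
      · exact h hq0
      · linarith
    · rcases hpc with h | h
      · exact h ((smul_eq_zero.mp hp0).resolve_left (by exact_mod_cast ha0.ne'))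
      · have := mul_pos ha0 h; linarith
  · have hr : ∀ (t : ℝ) (y : E n (2 * δ + 1) d), t • y = (t : ℂ) • y := by
      intro t y; funext i j w; simp
    rw [hr, hr, ← map_smul, ← map_smul, ← map_add]
    congr 1
    push_cast
    module

theorem zero_notMem_SS {n δ d e : ℕ} (A : Fin n → Matrix (Fin e) (Fin e) ℂ)
    (g : Matrix (Fin d) (Fin d) (FreeAlg n)) (hdeg : matDegLE g (2 * δ + 1))
    (hg : g ∉ Cone δ d A) : (0 : E n (2 * δ + 1) d) ∉ SS δ d A g := by
  rintro ⟨p, hp, c, hc, hpc, h0⟩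
  have h1 : p - (c : ℂ) • g = 0 := by
    refine kap_eq_zero (N := 2 * δ + 1) ?_ h0.symm
    intro i j
    exact Submodule.sub_mem _ (matDegLE_cone hp i j) (Submodule.smul_mem _ _ (hdeg i j))
  rw [sub_eq_zero] at h1
  rcases hc.eq_or_lt with hc0 | hc0
  · subst hc0
    rcases hpc with h | h
    · exact h (by simpa using h1)
    · exact lt_irrefl _ h
  · apply hg
    have := cone_smul hp c⁻¹ (by positivity)
    rw [h1, smul_smul] at this
    have hcc : ((c⁻¹ : ℝ) : ℂ) * (c : ℂ) = 1 := by
      rw [← Complex.ofReal_mul, inv_mul_cancel₀ hc0.ne', Complex.ofReal_one]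
    rwa [hcc, one_smul] at this

theorem separation {n δ d e : ℕ} (A : Fin n → Matrix (Fin e) (Fin e) ℂ)
    (hA : ∀ j, (A j).IsHermitian)
    (g : Matrix (Fin d) (Fin d) (FreeAlg n)) (hdeg : matDegLE g (2 * δ + 1))
    (hherm : adjM g = g) (hg : g ∉ Cone δ d A) :
    ∃ Λ : Matrix (Fin d) (Fin d) (FreeAlg n) →ₗ[ℂ] ℂ,
      (∀ p, Λ (adjM p) = (starRingEnd ℂ) (Λ p)) ∧
      (∀ c : V n δ d e, c ≠ 0 → 0 < (Λ (sq A c)).re) ∧ (Λ g).re < 0 := by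
  set N := 2 * δ + 1 with hN
  let Q : Set (E n N d) := (fun c : V n δ d e => kap N (sq A c)) '' Metric.sphere 0 1 ∪ {-kap N g}
  have hQ : IsCompact Q :=
    ((isCompact_sphere (0 : V n δ d e) 1).image (continuous_kap_sq A)).union isCompact_singleton
  have hQS : Q ⊆ SS δ d A g := by
    rintro y (⟨c, hc, rfl⟩ | hy)
    · refine ⟨sq A c, ⟨[c], by simp⟩, 0, le_rfl, Or.inl (sq_ne_zero A ?_), by simp; rfl⟩
      rintro rfl
      simp at hc
    · rw [Set.mem_singleton_iff] at hy
      subst hy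
      exact ⟨0, zero_mem_cone, 1, zero_le_one, Or.inr one_pos, by simp; rfl⟩
  have h0 : (0 : E n N d) ∉ convexHull ℝ Q := fun h =>
    zero_notMem_SS A g hdeg hg (convexHull_min hQS (convex_SS A g) h)
  obtain ⟨F, u, hu, hF⟩ := RCLike.geometric_hahn_banach_point_closed (𝕜 := ℂ)
    (convex_convexHull ℝ Q) (isCompact_convexHull' hQ).isClosed h0
  have hu0 : 0 < u := by simpa using hu
  have hpos : ∀ y ∈ Q, 0 < (F y).re := fun y hy =>
    hu0.trans (hF y (subset_convexHull ℝ Q hy))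
  let Λ : Matrix (Fin d) (Fin d) (FreeAlg n) →ₗ[ℂ] ℂ :=
    { toFun := fun p => F (kap N p) + (starRingEnd ℂ) (F (kap N (adjM p)))
      map_add' := fun p q => by simp only [adjM_add, map_add]; ring
      map_smul' := fun c p => by
        simp only [adjM_smul, map_smul, smul_eq_mul, map_mul, Complex.conj_conj,
          RingHom.id_apply]; ring }
  have hΛ : ∀ p, Λ p = F (kap N p) + (starRingEnd ℂ) (F (kap N (adjM p))) := fun p => rfl
  have hre : ∀ p, adjM p = p → (Λ p).re = 2 * (F (kap N p)).re := by
    intro p hp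
    rw [hΛ, hp, Complex.add_re, Complex.conj_re]; ring
  refine ⟨Λ, ?_, ?_, ?_⟩
  · intro p
    rw [hΛ, hΛ, adjM_adjM, map_add, Complex.conj_conj, add_comm]
  · intro c hc
    have hnorm : 0 < ‖c‖ := norm_pos_iff.mpr hc
    have hadj : ∀ c : V n δ d e, adjM (sq A c) = sq A c := by
      intro c
      rw [sq, adjM_add, adjM_sqT A hA, adjM_sqT 0 (fun _ => by simp [Matrix.IsHermitian])]
    set c' : V n δ d e := ((‖c‖⁻¹ : ℝ) : ℂ) • c with hc'
    have h1 : c = ((‖c‖ : ℝ) : ℂ) • c' := by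
      rw [hc', smul_smul, ← Complex.ofReal_mul, mul_inv_cancel₀ hnorm.ne', Complex.ofReal_one,
        one_smul]
    have h2 : c' ∈ Metric.sphere (0 : V n δ d e) 1 := by
      rw [mem_sphere_zero_iff_norm, hc', norm_smul, Complex.norm_real, norm_inv, norm_norm,
        inv_mul_cancel₀ hnorm.ne']
    have h3 : 0 < (Λ (sq A c')).re := by
      rw [hre _ (hadj c')]
      have := hpos _ (Or.inl ⟨c', h2, rfl⟩)
      linarith
    rw [h1, sq_smul, map_smul, smul_eq_mul, Complex.re_ofReal_mul]
    positivity
  · rw [hre g hherm]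
    have := hpos (-kap N g) (Or.inr rfl)
    rw [map_neg, Complex.neg_re] at this
    linarith


section GNS

variable {n δ d k : ℕ} (Λ : Matrix (Fin d) (Fin d) (FreeAlg n) →ₗ[ℂ] ℂ)
  (φ : Fin k ≃ Fin d × Wd n δ)

/-- Value of the functional on a word placed at entry `(i,j)`. -/
noncomputable def lw (i j : Fin d) (m : List (Fin n)) : ℂ := Λ (Matrix.single i j (wd m))

/-- Gram matrix. -/
noncomputable def gram : Matrix (Fin k) (Fin k) ℂ :=
  fun p q => lw Λ (φ p).1 (φ q).1 ((φ p).2.1.reverse ++ (φ q).2.1)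

/-- Localizing matrix for the variable `x`. -/
noncomputable def locM (x : Fin n) : Matrix (Fin k) (Fin k) ℂ :=
  fun p q => lw Λ (φ p).1 (φ q).1 ((φ p).2.1.reverse ++ x :: (φ q).2.1)

/-- Localizing matrix for the pencil. -/
noncomputable def locL {e : ℕ} (A : Fin n → Matrix (Fin e) (Fin e) ℂ) :
    Matrix (Fin e × Fin k) (Fin e × Fin k) ℂ :=
  (1 : Matrix (Fin e) (Fin e) ℂ) ⊗ₖ gram Λ φ + ∑ x, A x ⊗ₖ locM Λ φ x

theorem lam_eq (p : Matrix (Fin d) (Fin d) (FreeAlg n)) :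
    Λ p = ∑ i, ∑ j, Λ (Matrix.single i j (p i j)) := by
  conv_lhs => rw [Matrix.matrix_eq_sum_single p]
  simp only [map_sum]

theorem lam_single_add (i j : Fin d) (a b : FreeAlg n) :
    Λ (Matrix.single i j (a + b)) = Λ (Matrix.single i j a) + Λ (Matrix.single i j b) := by
  rw [Matrix.single_add, map_add]

theorem lam_single_smul (i j : Fin d) (c : ℂ) (a : FreeAlg n) :
    Λ (Matrix.single i j (c • a)) = c * Λ (Matrix.single i j a) := by
  rw [← Matrix.smul_single, map_smul, smul_eq_mul]

theorem lam_single_sum {ι : Type*} (s : Finset ι) (i j : Fin d) (a : ι → FreeAlg n) :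
    Λ (Matrix.single i j (∑ t ∈ s, a t)) = ∑ t ∈ s, Λ (Matrix.single i j (a t)) := by
  classical
  induction s using Finset.induction_on with
  | empty => simp
  | insert b s hb ih => rw [Finset.sum_insert hb, lam_single_add, ih, Finset.sum_insert hb]

theorem sum_swap {I J : Type*} [Fintype I] [Fintype J] {e : ℕ}
    (F : I → I → Fin e → Fin e → J → J → ℂ) :
    ∑ i, ∑ j, ∑ k, ∑ l, ∑ u, ∑ w, F i j k l u w
      = ∑ k, ∑ i, ∑ u, ∑ l, ∑ j, ∑ w, F i j k l u w := by
  calc ∑ i, ∑ j, ∑ k, ∑ l, ∑ u, ∑ w, F i j k l u w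
      = ∑ i, ∑ k, ∑ j, ∑ l, ∑ u, ∑ w, F i j k l u w :=
        Finset.sum_congr rfl fun i _ => Finset.sum_comm
    _ = ∑ k, ∑ i, ∑ j, ∑ l, ∑ u, ∑ w, F i j k l u w := Finset.sum_comm
    _ = ∑ k, ∑ i, ∑ j, ∑ u, ∑ l, ∑ w, F i j k l u w :=
        Finset.sum_congr rfl fun k _ => Finset.sum_congr rfl fun i _ =>
          Finset.sum_congr rfl fun j _ => Finset.sum_comm
    _ = ∑ k, ∑ i, ∑ u, ∑ j, ∑ l, ∑ w, F i j k l u w :=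
        Finset.sum_congr rfl fun k _ => Finset.sum_congr rfl fun i _ => Finset.sum_comm
    _ = ∑ k, ∑ i, ∑ u, ∑ l, ∑ j, ∑ w, F i j k l u w :=
        Finset.sum_congr rfl fun k _ => Finset.sum_congr rfl fun i _ =>
          Finset.sum_congr rfl fun u _ => Finset.sum_comm

theorem quad_eq {e : ℕ} (A : Fin n → Matrix (Fin e) (Fin e) ℂ) (y : Fin e × Fin k → ℂ) :
    star y ⬝ᵥ (locL Λ φ A *ᵥ y) = Λ (sqT A fun a i w => y (a, φ.symm (i, w))) := by
  rw [lam_eq]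
  simp only [sqT_apply, lam_single_sum, lam_single_smul, lam_single_add]
  rw [sum_swap]
  simp only [dotProduct, Matrix.mulVec, Fintype.sum_prod_type, Finset.mul_sum]
  refine Finset.sum_congr rfl fun a _ => ?_
  have e1 : ∀ F : Fin k → ℂ, ∑ p, F p = ∑ i, ∑ u, F (φ.symm (i, u)) := by
    intro F
    rw [← Fintype.sum_prod_type (f := fun x => F (φ.symm x))]
    exact (Equiv.sum_comp φ.symm F).symm
  rw [e1]
  refine Finset.sum_congr rfl fun i _ => Finset.sum_congr rfl fun u _ =>
    Finset.sum_congr rfl fun b _ => ?_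
  rw [e1]
  refine Finset.sum_congr rfl fun j _ => Finset.sum_congr rfl fun w _ => ?_
  simp only [locL, Matrix.add_apply, Matrix.sum_apply, Matrix.kroneckerMap_apply, gram, locM, lw,
    Equiv.apply_symm_apply, Matrix.one_apply, Pi.star_apply, RCLike.star_def]
  ring

theorem lw_conj (hstar : ∀ p, Λ (adjM p) = (starRingEnd ℂ) (Λ p))
    (i j : Fin d) (m : List (Fin n)) :
    (starRingEnd ℂ) (lw Λ i j m) = lw Λ j i m.reverse := by
  rw [lw, ← hstar, lw, ← nstar_wd]
  congr 1
  ext a b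
  simp only [adjM, Matrix.single_apply]
  by_cases h : i = b ∧ j = a
  · rw [if_pos h, if_pos h.symm]
  · rw [if_neg h, if_neg (fun h' => h h'.symm), nstar_zero]

theorem gram_herm (hstar : ∀ p, Λ (adjM p) = (starRingEnd ℂ) (Λ p))
    : (gram Λ φ).IsHermitian := by
  ext p q
  simp only [Matrix.conjTranspose_apply, gram, RCLike.star_def, lw_conj Λ hstar]
  simp

theorem locM_herm (hstar : ∀ p, Λ (adjM p) = (starRingEnd ℂ) (Λ p))
    (x : Fin n) : (locM Λ φ x).IsHermitian := by
  ext p q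
  simp only [Matrix.conjTranspose_apply, locM, RCLike.star_def, lw_conj Λ hstar]
  simp

theorem locL_herm (hstar : ∀ p, Λ (adjM p) = (starRingEnd ℂ) (Λ p))
    {e : ℕ} (A : Fin n → Matrix (Fin e) (Fin e) ℂ)
    (hA : ∀ j, (A j).IsHermitian) : (locL Λ φ A).IsHermitian := by
  unfold Matrix.IsHermitian locL
  rw [Matrix.conjTranspose_add, Matrix.conjTranspose_sum, Matrix.conjTranspose_kronecker,
    Matrix.conjTranspose_one, (gram_herm Λ φ hstar).eq]
  congr 1
  refine Finset.sum_congr rfl fun x _ => ?_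
  rw [Matrix.conjTranspose_kronecker, (hA x).eq, (locM_herm Λ φ hstar x).eq]

theorem sqT_zero {e : ℕ} (A : Fin n → Matrix (Fin e) (Fin e) ℂ) :
    sqT A (0 : Fin e → Fin d → Wd n δ → ℂ) = 0 := by
  have := sqT_smul A 0 (0 : Fin e → Fin d → Wd n δ → ℂ)
  simpa using this

theorem lam_sqT_im (hstar : ∀ p, Λ (adjM p) = (starRingEnd ℂ) (Λ p))
    {e : ℕ} (A : Fin n → Matrix (Fin e) (Fin e) ℂ)
    (hA : ∀ j, (A j).IsHermitian) (c : Fin e → Fin d → Wd n δ → ℂ) :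
    (Λ (sqT A c)).im = 0 := by
  have h := hstar (sqT A c)
  rw [adjM_sqT A hA] at h
  exact Complex.conj_eq_iff_im.mp h.symm

theorem locL_posSemidef (hstar : ∀ p, Λ (adjM p) = (starRingEnd ℂ) (Λ p))
    {e : ℕ} (A : Fin n → Matrix (Fin e) (Fin e) ℂ)
    (hA : ∀ j, (A j).IsHermitian)
    (hpos : ∀ c : V n δ d e, c ≠ 0 → 0 < (Λ (sq A c)).re) : (locL Λ φ A).PosSemidef := by
  refine Matrix.PosSemidef.of_dotProduct_mulVec_nonneg (locL_herm Λ φ hstar A hA) fun y => ?_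
  rw [quad_eq]
  set c : Fin e → Fin d → Wd n δ → ℂ := fun a i w => y (a, φ.symm (i, w))
  rw [Complex.nonneg_iff]
  refine ⟨?_, (lam_sqT_im Λ hstar A hA c).symm⟩
  by_cases hc : c = 0
  · rw [hc, sqT_zero]; simp
  · have := hpos (c, 0) (by simpa using hc)
    rw [sq, sqT_zero, add_zero] at this
    exact this.le

theorem gram_posDef (hstar : ∀ p, Λ (adjM p) = (starRingEnd ℂ) (Λ p))
    {e : ℕ} (A : Fin n → Matrix (Fin e) (Fin e) ℂ)
    (hpos : ∀ c : V n δ d e, c ≠ 0 → 0 < (Λ (sq A c)).re) : (gram Λ φ).PosDef := by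
  rcases isEmpty_or_nonempty (Fin d) with hd | ⟨⟨i0⟩⟩
  · have : IsEmpty (Fin k) := ⟨fun p => hd.elim (φ p).1⟩
    exact Matrix.PosDef.of_dotProduct_mulVec_pos (gram_herm Λ φ hstar)
      fun y hy => (hy (Subsingleton.elim _ _)).elim
  have h0 : ∀ j : Fin n, ((0 : Fin n → Matrix (Fin d) (Fin d) ℂ) j).IsHermitian :=
    fun _ => by simp [Matrix.IsHermitian]
  have key : (locL Λ φ (0 : Fin n → Matrix (Fin d) (Fin d) ℂ)).PosDef := by
    refine Matrix.PosDef.of_dotProduct_mulVec_pos (locL_herm Λ φ hstar 0 h0) fun y hy => ?_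
    rw [quad_eq]
    set c : Fin d → Fin d → Wd n δ → ℂ := fun a i w => y (a, φ.symm (i, w)) with hcdef
    rw [Complex.pos_iff]
    refine ⟨?_, (lam_sqT_im Λ hstar 0 h0 c).symm⟩
    have hc : c ≠ 0 := by
      intro hc
      apply hy
      funext ⟨a, p⟩
      have := congrFun (congrFun (congrFun hc a) (φ p).1) (φ p).2
      simpa [hcdef] using this
    have := hpos (0, c) (by simpa using hc)
    rwa [sq, sqT_zero, zero_add] at this
  have := key.submatrix (e := fun p : Fin k => (i0, p)) (fun p q h => (Prod.mk.inj h).2)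
  convert this using 1
  ext p q
  simp [locL]

end GNS

theorem gns {n δ d e : ℕ} (A : Fin n → Matrix (Fin e) (Fin e) ℂ)
    (hA : ∀ j, (A j).IsHermitian) (Λ : Matrix (Fin d) (Fin d) (FreeAlg n) →ₗ[ℂ] ℂ)
    (hstar : ∀ p, Λ (adjM p) = (starRingEnd ℂ) (Λ p))
    (hpos : ∀ c : V n δ d e, c ≠ 0 → 0 < (Λ (sq A c)).re) :
    ∃ (k : ℕ) (X : Fin n → Matrix (Fin k) (Fin k) ℂ) (ξ : Fin d × Fin k → ℂ),
      (∀ j, (X j).IsHermitian) ∧ (monicK A X).PosSemidef ∧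
      ∀ g : Matrix (Fin d) (Fin d) (FreeAlg n), matDegLE g (2 * δ + 1) →
        star ξ ⬝ᵥ (evalM g X *ᵥ ξ) = Λ g := by
  set k := Fintype.card (Fin d × Wd n δ)
  let φ : Fin k ≃ Fin d × Wd n δ := (Fintype.equivFin _).symm
  have hG := gram_posDef Λ φ hstar A hpos
  obtain ⟨R, hRu, hR⟩ : ∃ R : Matrix (Fin k) (Fin k) ℂ, IsUnit R ∧ Rᴴ * R = gram Λ φ := by
    obtain ⟨R, hR⟩ : ∃ R : Matrix (Fin k) (Fin k) ℂ, gram Λ φ = Rᴴ * R := by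
      open scoped MatrixOrder in
      exact CStarAlgebra.nonneg_iff_eq_star_mul_self.mp hG.posSemidef.nonneg
    refine ⟨R, ?_, hR.symm⟩
    have hu := hG.isUnit
    rw [hR, Matrix.isUnit_iff_isUnit_det, Matrix.det_mul] at hu
    rw [Matrix.isUnit_iff_isUnit_det]
    exact isUnit_of_mul_isUnit_right hu
  set S : Matrix (Fin k) (Fin k) ℂ := R⁻¹ with hS
  have hdet := (Matrix.isUnit_iff_isUnit_det R).mp hRu
  have hRS : R * S = 1 := Matrix.mul_nonsing_inv R hdet
  have hSR : S * R = 1 := Matrix.nonsing_inv_mul R hdet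
  have hRS' : Sᴴ * Rᴴ = 1 := by rw [← Matrix.conjTranspose_mul, hRS, Matrix.conjTranspose_one]
  have hSR' : Rᴴ * Sᴴ = 1 := by rw [← Matrix.conjTranspose_mul, hSR, Matrix.conjTranspose_one]
  let X : Fin n → Matrix (Fin k) (Fin k) ℂ := fun x => Sᴴ * locM Λ φ x * S
  have hX : ∀ j, (X j).IsHermitian := fun j =>
    Matrix.isHermitian_conjTranspose_mul_mul S (locM_herm Λ φ hstar j)
  let em : Wd n δ := ⟨[], by simp⟩
  -- column formulas
  have hXR : ∀ x, X x * R = Sᴴ * locM Λ φ x := by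
    intro x
    simp only [X]
    rw [Matrix.mul_assoc, hSR, Matrix.mul_one]
  have hSG : Sᴴ * gram Λ φ = R := by
    rw [← hR, ← Matrix.mul_assoc, hRS', Matrix.one_mul]
  have step : ∀ x j (w : List (Fin n)) (hw : w.length ≤ δ) (hxw : (x :: w).length ≤ δ),
      X x *ᵥ R.col (φ.symm (j, ⟨w, hw⟩)) = R.col (φ.symm (j, ⟨x :: w, hxw⟩)) := by
    intro x j w hw hxw
    funext a
    have h1 : (X x *ᵥ R.col (φ.symm (j, ⟨w, hw⟩))) a = (X x * R) a (φ.symm (j, ⟨w, hw⟩)) := by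
      simp [Matrix.mulVec, dotProduct, Matrix.mul_apply, Matrix.col_apply]
    have h2 : R.col (φ.symm (j, ⟨x :: w, hxw⟩)) a
        = (Sᴴ * gram Λ φ) a (φ.symm (j, ⟨x :: w, hxw⟩)) := by
      rw [hSG]; rfl
    rw [h1, h2, hXR, Matrix.mul_apply, Matrix.mul_apply]
    refine Finset.sum_congr rfl fun b _ => ?_
    simp [locM, gram]
  have word : ∀ j (w : List (Fin n)) (hw : w.length ≤ δ),
      FreeAlgebra.lift ℂ X (wd w) *ᵥ R.col (φ.symm (j, em)) = R.col (φ.symm (j, ⟨w, hw⟩)) := by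
    intro j w
    induction w with
    | nil => intro hw; simp [wd_nil, em]
    | cons x w ih =>
      intro hw
      have hw' : w.length ≤ δ := by simp only [List.length_cons] at hw; omega
      rw [wd_cons, map_mul, ← Matrix.mulVec_mulVec, ih hw', FreeAlgebra.lift_ι_apply,
        step x j w hw' hw]
  have final : ∀ i j (m : List (Fin n)), m.length ≤ 2 * δ + 1 →
      star (R.col (φ.symm (i, em))) ⬝ᵥ (FreeAlgebra.lift ℂ X (wd m) *ᵥ R.col (φ.symm (j, em)))
        = lw Λ i j m := by
    intro i j m hm
    by_cases hmδ : m.length ≤ δ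
    · rw [word j m hmδ]
      have : star (R.col (φ.symm (i, em))) ⬝ᵥ R.col (φ.symm (j, ⟨m, hmδ⟩))
          = (Rᴴ * R) (φ.symm (i, em)) (φ.symm (j, ⟨m, hmδ⟩)) := rfl
      rw [this, hR]
      simp [gram, em]
    · obtain ⟨a, x, w, rfl, ha, hw⟩ : ∃ a x w, m = a ++ x :: w ∧ a.length ≤ δ ∧
          w.length ≤ δ := by
        have hlt : m.length - δ - 1 < m.length := by omega
        refine ⟨m.take (m.length - δ - 1), m[m.length - δ - 1], m.drop (m.length - δ - 1 + 1),
          ?_, ?_, ?_⟩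
        · simp
        · simp; omega
        · simp; omega
      have ha' : a.reverse.length ≤ δ := by simpa using ha
      have h1 : FreeAlgebra.lift ℂ X (wd a) = (FreeAlgebra.lift ℂ X (wd a.reverse))ᴴ := by
        rw [← lift_nstar X hX, nstar_wd, List.reverse_reverse]
      rw [wd_append, wd_cons, map_mul, map_mul, ← Matrix.mulVec_mulVec, ← Matrix.mulVec_mulVec,
        word j w hw, h1, FreeAlgebra.lift_ι_apply, Matrix.dotProduct_mulVec, ← Matrix.star_mulVec,
        word i _ ha']
      have h2 : star (R.col (φ.symm (i, ⟨a.reverse, ha'⟩))) ⬝ᵥ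
          (X x *ᵥ R.col (φ.symm (j, ⟨w, hw⟩)))
          = (Rᴴ * (X x * R)) (φ.symm (i, ⟨a.reverse, ha'⟩)) (φ.symm (j, ⟨w, hw⟩)) := rfl
      rw [h2, hXR, ← Matrix.mul_assoc, hSR', Matrix.one_mul]
      simp [locM]
  have final' : ∀ i j (a : FreeAlg n), a ∈ degLE n (2 * δ + 1) →
      star (R.col (φ.symm (i, em))) ⬝ᵥ (FreeAlgebra.lift ℂ X a *ᵥ R.col (φ.symm (j, em)))
        = Λ (Matrix.single i j a) := by
    intro i j a ha
    induction ha using Submodule.span_induction with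
    | mem a ha =>
      obtain ⟨m, hm, rfl⟩ := ha
      exact final i j m hm
    | zero => simp
    | add a b _ _ ha hb =>
      rw [map_add, Matrix.add_mulVec, dotProduct_add, ha, hb, lam_single_add]
    | smul c a _ ha =>
      rw [map_smul, Matrix.smul_mulVec, dotProduct_smul, ha, lam_single_smul, smul_eq_mul]
  refine ⟨k, X, fun p => R p.2 (φ.symm (p.1, em)), hX, ?_, ?_⟩
  · have hfac : monicK A X = ((1 : Matrix (Fin e) (Fin e) ℂ) ⊗ₖ S)ᴴ * locL Λ φ A *
        ((1 : Matrix (Fin e) (Fin e) ℂ) ⊗ₖ S) := by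
      have hone : Sᴴ * gram Λ φ * S = 1 := by rw [hSG, hRS]
      rw [Matrix.conjTranspose_kronecker, Matrix.conjTranspose_one, locL, Matrix.mul_add,
        Matrix.add_mul, Matrix.mul_sum, Matrix.sum_mul, monicK]
      congr 1
      · rw [← Matrix.mul_kronecker_mul, ← Matrix.mul_kronecker_mul, hone, Matrix.one_mul,
          Matrix.one_mul, Matrix.one_kronecker_one]
      · refine Finset.sum_congr rfl fun x _ => ?_
        rw [← Matrix.mul_kronecker_mul, ← Matrix.mul_kronecker_mul, Matrix.one_mul,
          Matrix.mul_one]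
    rw [hfac]
    exact (locL_posSemidef Λ φ hstar A hA hpos).conjTranspose_mul_mul_same _
  · intro g hg
    rw [lam_eq]
    simp only [← final' _ _ _ (hg _ _)]
    simp only [dotProduct, Matrix.mulVec, Fintype.sum_prod_type, Finset.mul_sum, evalM,
      Pi.star_apply, Matrix.col_apply]
    refine Finset.sum_congr rfl fun i _ => ?_
    rw [Finset.sum_comm]

theorem hard_direction {n d e δ : ℕ} (A : Fin n → Matrix (Fin e) (Fin e) ℂ)
    (hA : ∀ j, (A j).IsHermitian) (g : Matrix (Fin d) (Fin d) (FreeAlg n))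
    (hdeg : matDegLE g (2 * δ + 1)) (hherm : adjM g = g)
    (hg : ∀ (k : ℕ) (X : Fin n → Matrix (Fin k) (Fin k) ℂ), (∀ j, (X j).IsHermitian) →
        (monicK A X).PosSemidef → (evalM g X).PosSemidef) :
    ∃ (M N : ℕ) (s : Fin M → Matrix (Fin d) (Fin d) (FreeAlg n))
          (v : Fin N → Matrix (Fin e) (Fin d) (FreeAlg n)),
        (∀ i, matDegLE (s i) δ) ∧ (∀ j, matDegLE (v j) δ) ∧
        g = ∑ i, adjM (s i) * s i + ∑ j, adjM (v j) * monicPoly A * v j := by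
  by_cases hgC : g ∈ Cone δ d A
  · obtain ⟨l, rfl⟩ := hgC
    refine ⟨l.length, l.length, fun i => PM (l.get i).2, fun i => PM (l.get i).1,
      fun i => matDegLE_PM _, fun i => matDegLE_PM _, ?_⟩
    have hm0 : monicPoly (0 : Fin n → Matrix (Fin d) (Fin d) ℂ) = 1 := by
      ext i j; simp [monicPoly]
    rw [add_comm, ← Finset.sum_add_distrib]
    have : ∀ i : Fin l.length, adjM (PM (l.get i).1) * monicPoly A * PM (l.get i).1
        + adjM (PM (l.get i).2) * PM (l.get i).2 = sq A (l.get i) := by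
      intro i
      rw [sq, sqT, sqT, hm0, Matrix.mul_one]
    simp only [this]
    rw [← List.sum_ofFn]
    congr 1
    refine List.ext_get (by simp) ?_
    intro i h1 h2
    simp
  · exfalso
    obtain ⟨Λ, hstar, hpos, hneg⟩ := separation A hA g hdeg hherm hgC
    obtain ⟨k, X, ξ, hX, hL, hΛ⟩ := gns A hA Λ hstar hpos
    have h := (hg k X hX hL).dotProduct_mulVec_nonneg ξ
    rw [hΛ g hdeg, Complex.nonneg_iff] at h
    linarith [h.1]

theorem exists_matDegLE {n d : ℕ} (f : Matrix (Fin d) (Fin d) (FreeAlg n)) :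
    matDegLE f (matDeg f) := by
  have mono : ∀ {N M : ℕ}, N ≤ M → degLE n N ≤ degLE n M := fun h =>
    Submodule.span_mono fun a ⟨w, hw, ha⟩ => ⟨w, hw.trans h, ha⟩
  have ex : ∀ a : FreeAlg n, ∃ N, a ∈ degLE n N := by
    intro a
    induction a using word_induction with
    | hw w => exact ⟨w.length, wd_mem_degLE w le_rfl⟩
    | h0 => exact ⟨0, Submodule.zero_mem _⟩
    | hadd a b ha hb =>
      obtain ⟨N, hN⟩ := ha
      obtain ⟨M, hM⟩ := hb
      exact ⟨max N M, Submodule.add_mem _ (mono (le_max_left _ _) hN)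
        (mono (le_max_right _ _) hM)⟩
    | hs c a ha =>
      obtain ⟨N, hN⟩ := ha
      exact ⟨N, Submodule.smul_mem _ _ hN⟩
  choose F hF using ex
  have hne : {δ | matDegLE f δ}.Nonempty := by
    refine ⟨∑ i, ∑ j, F (f i j), fun i j => mono ?_ (hF (f i j))⟩
    refine le_trans ?_ (Finset.single_le_sum (f := fun i => ∑ j, F (f i j))
      (fun _ _ => Nat.zero_le _) (Finset.mem_univ i))
    exact Finset.single_le_sum (f := fun j => F (f i j))
      (fun _ _ => Nat.zero_le _) (Finset.mem_univ j)
  exact Nat.sInf_mem hne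

end EigSDP

/-- SDP formulation of eigenvalue optimization over a free spectrahedron:
for each `μ ∈ ℝ`, `f(X) ⪯ μ·I` on `D_L` iff `μ·I − f` has a degree-bounded
sums-of-squares certificate with weights from `L`. -/
theorem eigenvalue_optimization_sdp {n d e : ℕ}
    (f : Matrix (Fin d) (Fin d) (FreeAlg n)) (hf : IsHermPoly f)
    (A : Fin n → Matrix (Fin e) (Fin e) ℂ) (hA : ∀ j, (A j).IsHermitian) (μ : ℝ) :
    (∀ (k : ℕ) (X : Fin n → Matrix (Fin k) (Fin k) ℂ), (∀ j, (X j).IsHermitian) →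
        (monicK A X).PosSemidef →
        ((μ : ℂ) • (1 : Matrix (Fin d × Fin k) (Fin d × Fin k) ℂ) -
          evalM f X).PosSemidef) ↔
      (∃ (M N : ℕ) (s : Fin M → Matrix (Fin d) (Fin d) (FreeAlg n))
          (v : Fin N → Matrix (Fin e) (Fin d) (FreeAlg n)),
        (∀ i, matDegLE (s i) (matDeg f / 2)) ∧
        (∀ j, matDegLE (v j) (matDeg f / 2)) ∧
        (μ : ℂ) • (1 : Matrix (Fin d) (Fin d) (FreeAlg n)) - f =
          ∑ i, adjM (s i) * s i + ∑ j, adjM (v j) * monicPoly A * v j) := by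
  have heval : ∀ (k : ℕ) (X : Fin n → Matrix (Fin k) (Fin k) ℂ),
      evalM ((μ : ℂ) • (1 : Matrix (Fin d) (Fin d) (FreeAlg n)) - f) X =
        (μ : ℂ) • (1 : Matrix (Fin d × Fin k) (Fin d × Fin k) ℂ) - evalM f X := by
    intro k X
    rw [EigSDP.evalM_sub, EigSDP.evalM_smul, EigSDP.evalM_one]
  constructor
  · intro h
    refine EigSDP.hard_direction (δ := matDeg f / 2) A hA _ ?_ ?_ ?_
    · intro i j
      refine Submodule.sub_mem _ ?_ ?_
      · rw [Matrix.smul_apply]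
        refine Submodule.smul_mem _ _ ?_
        by_cases hij : i = j
        · subst hij
          rw [Matrix.one_apply_eq, ← EigSDP.wd_nil]
          exact EigSDP.wd_mem_degLE _ (by simp)
        · rw [Matrix.one_apply_ne hij]
          exact Submodule.zero_mem _
      · refine Submodule.span_mono ?_ (EigSDP.exists_matDegLE f i j)
        rintro a ⟨w, hw, rfl⟩
        exact ⟨w, by omega, rfl⟩
    · have hf2 : adjM f = f := Matrix.ext fun i j => (hf i j).symm
      rw [EigSDP.adjM_sub, EigSDP.adjM_smul, EigSDP.adjM_one, Complex.conj_ofReal, hf2]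
    · intro k X hX hL
      rw [heval]
      exact h k X hX hL
  · rintro ⟨M, N, s, v, -, -, hg⟩ k X hX hL
    rw [← heval]
    exact EigSDP.easy_direction A _ s v hg X hX hL
end

section
/- Convexity of a free semialgebraic set implies matrix convexity: let f = f* ∈ M_d(ℂ⟨x⟩) with f(0) positive definite, and suppose that for every k ∈ ℕ the set D_f(k) is a convex subset of (H_k)ⁿ. Then D_f is matrix convex: for all k₁,…,k_ℓ,k ∈ ℕ, all Vᵢ ∈ ℂ^{kᵢ×k} with V₁*V₁ + ⋯ + V_ℓ*V_ℓ = I_k, and all X⁽ⁱ⁾ ∈ D_f(kᵢ) for i = 1,…,ℓ, the tuple V₁*X⁽¹⁾V₁ + ⋯ + V_ℓ*X⁽ℓ⁾V_ℓ (whose j-th entry is Σᵢ Vᵢ*Xⱼ⁽ⁱ⁾Vᵢ) belongs to D_f(k). -/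
open scoped Kronecker Matrix ComplexOrder

lemma lift_intertwine {n r k : ℕ} (Z : Fin n → Matrix (Fin r) (Fin r) ℂ)
    (A : Fin n → Matrix (Fin k) (Fin k) ℂ) (W : Matrix (Fin r) (Fin k) ℂ)
    (h : ∀ j, Z j * W = W * A j) (p : FreeAlg n) :
    FreeAlgebra.lift ℂ Z p * W = W * FreeAlgebra.lift ℂ A p := by
  induction p using FreeAlgebra.induction with
  | grade0 c => simp [Algebra.algebraMap_eq_smul_one]
  | grade1 j => simpa using h j
  | mul a b ha hb => rw [map_mul, map_mul, Matrix.mul_assoc, hb, ← Matrix.mul_assoc, ha, Matrix.mul_assoc]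
  | add a b ha hb => rw [map_add, map_add, Matrix.add_mul, Matrix.mul_add, ha, hb]

lemma psd_conj {d r k : ℕ} (F : Fin d → Fin d → Matrix (Fin r) (Fin r) ℂ)
    (W : Matrix (Fin r) (Fin k) ℂ)
    (h : (Matrix.of fun p q : Fin d × Fin r => F p.1 q.1 p.2 q.2).PosSemidef) :
    (Matrix.of fun p q : Fin d × Fin k => (Wᴴ * F p.1 q.1 * W) p.2 q.2).PosSemidef := by
  have h2 := h.conjTranspose_mul_mul_same ((1 : Matrix (Fin d) (Fin d) ℂ) ⊗ₖ W)
  refine Eq.mp (congrArg Matrix.PosSemidef ?_) h2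
  symm
  ext ⟨i, a⟩ ⟨j, b⟩
  simp [Matrix.mul_apply, Fintype.sum_prod_type, Matrix.one_apply, Matrix.kroneckerMap_apply,
    Finset.sum_mul, apply_ite]

lemma psd_pull {n d r k : ℕ} (f : Matrix (Fin d) (Fin d) (FreeAlg n))
    (Z : Fin n → Matrix (Fin r) (Fin r) ℂ)
    (A : Fin n → Matrix (Fin k) (Fin k) ℂ) (W : Matrix (Fin r) (Fin k) ℂ)
    (hW : Wᴴ * W = 1) (h : ∀ j, Z j * W = W * A j) (hZ : (evalM f Z).PosSemidef) :
    (evalM f A).PosSemidef := by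
  have := psd_conj (fun i j => FreeAlgebra.lift ℂ Z (f i j)) W hZ
  refine Eq.mp (congrArg Matrix.PosSemidef ?_) this
  symm
  ext ⟨i, a⟩ ⟨j, b⟩
  simp only [evalM, Matrix.of_apply]
  rw [Matrix.mul_assoc, lift_intertwine Z A W h, ← Matrix.mul_assoc, hW, Matrix.one_mul]

lemma psd_compress {n d : ℕ}
    (f : Matrix (Fin d) (Fin d) (FreeAlg n))
    (hconv : ∀ (k : ℕ) (X Y : Fin n → Matrix (Fin k) (Fin k) ℂ),
      (∀ j, (X j).IsHermitian) → (∀ j, (Y j).IsHermitian) →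
      (evalM f X).PosSemidef → (evalM f Y).PosSemidef →
      ∀ t : ℝ, 0 ≤ t → t ≤ 1 →
        (evalM f (fun j => (t : ℂ) • X j + ((1 - t : ℝ) : ℂ) • Y j)).PosSemidef)
    {m k : ℕ} (Y : Fin n → Matrix (Fin m) (Fin m) ℂ) (V : Matrix (Fin m) (Fin k) ℂ)
    (hV : Vᴴ * V = 1) (hY : ∀ j, (Y j).IsHermitian) (hfY : (evalM f Y).PosSemidef) :
    (evalM f (fun j => Vᴴ * Y j * V)).PosSemidef := by
  set U : Matrix (Fin m) (Fin m) ℂ := (2 : ℂ) • (V * Vᴴ) - 1 with hU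
  have hUh : Uᴴ = U := by
    simp [hU, Matrix.conjTranspose_sub, Matrix.conjTranspose_smul, Matrix.conjTranspose_mul]
  have hUV : U * V = V := by
    rw [hU, Matrix.sub_mul, Matrix.smul_mul, Matrix.mul_assoc, hV, Matrix.mul_one, Matrix.one_mul,
      two_smul, add_sub_cancel_right]
  have hUU : U * U = 1 := by
    have : U * U = (2 : ℂ) • (U * V * Vᴴ) - U := by
      conv_lhs => rw [hU]
      rw [← hU]
      conv_lhs => rw [show U * U = U * ((2 : ℂ) • (V * Vᴴ) - 1) from rfl]
      rw [Matrix.mul_sub, Matrix.mul_smul, Matrix.mul_one, Matrix.mul_assoc]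
    rw [this, hUV, hU]; abel
  have h1 : (evalM f (fun j => U * Y j * U)).PosSemidef := by
    refine psd_pull f Y _ U (by rw [hUh, hUU]) (fun j => ?_) hfY
    rw [← Matrix.mul_assoc, ← Matrix.mul_assoc, hUU, Matrix.one_mul]
  have hh : ∀ j, (U * Y j * U).IsHermitian := fun j => by
    have := Matrix.isHermitian_conjTranspose_mul_mul U (hY j)
    rwa [hUh] at this
  have h2 := hconv m Y (fun j => U * Y j * U) hY hh hfY h1 (1/2) (by norm_num) (by norm_num)
  refine psd_pull f _ _ V hV (fun j => ?_) h2
  have e : U * Y j * U * V = (2 : ℂ) • (V * (Vᴴ * Y j * V)) - Y j * V := by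
    rw [Matrix.mul_assoc, hUV, hU]
    simp only [Matrix.sub_mul, Matrix.smul_mul, Matrix.one_mul, Matrix.mul_assoc]
  rw [Matrix.add_mul, Matrix.smul_mul, Matrix.smul_mul, e]
  push_cast
  module

/-- for `f = f*` with `f(0) ≻ 0`, levelwise convexity of `D_f` implies
matrix convexity of `D_f`. -/
theorem convex_implies_matrixConvex {n d : ℕ}
    (f : Matrix (Fin d) (Fin d) (FreeAlg n)) (hf : IsHermPoly f)
    (hf0 : (evalZero f).PosDef)
    (hconv : ∀ (k : ℕ) (X Y : Fin n → Matrix (Fin k) (Fin k) ℂ),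
      (∀ j, (X j).IsHermitian) → (∀ j, (Y j).IsHermitian) →
      (evalM f X).PosSemidef → (evalM f Y).PosSemidef →
      ∀ t : ℝ, 0 ≤ t → t ≤ 1 →
        (evalM f (fun j => (t : ℂ) • X j + ((1 - t : ℝ) : ℂ) • Y j)).PosSemidef)
    (ℓ k : ℕ) (κ : Fin ℓ → ℕ)
    (V : (i : Fin ℓ) → Matrix (Fin (κ i)) (Fin k) ℂ)
    (hV : ∑ i, (V i)ᴴ * V i = 1)
    (X : (i : Fin ℓ) → Fin n → Matrix (Fin (κ i)) (Fin (κ i)) ℂ)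
    (hXherm : ∀ i j, (X i j).IsHermitian)
    (hX : ∀ i, (evalM f (X i)).PosSemidef) :
    (∀ j, (∑ i, (V i)ᴴ * X i j * V i).IsHermitian) ∧
      (evalM f (fun j => ∑ i, (V i)ᴴ * X i j * V i)).PosSemidef := by
  refine ⟨fun j => ?_, ?_⟩
  · exact isSelfAdjoint_sum _ fun i _ =>
      Matrix.isHermitian_conjTranspose_mul_mul (V i) (hXherm i j)
  obtain ⟨m, ⟨e⟩⟩ : ∃ m : ℕ, Nonempty ((Σ i, Fin (κ i)) ≃ Fin m) := ⟨_, ⟨finSigmaFinEquiv⟩⟩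
  let W : (i : Fin ℓ) → Matrix (Fin m) (Fin (κ i)) ℂ :=
    fun i => Matrix.of fun a b => if a = e ⟨i, b⟩ then 1 else 0
  have hW1 : ∀ i, (W i)ᴴ * W i = 1 := fun i => by
    ext a b
    simp [W, Matrix.mul_apply, Matrix.one_apply, apply_ite, eq_comm]
  have hW0 : ∀ i j, i ≠ j → (W i)ᴴ * W j = 0 := fun i j hij => by
    ext a b
    simp [W, Matrix.mul_apply, apply_ite, hij.symm]
  have hWs : ∑ i, W i * (W i)ᴴ = 1 := by
    ext a b
    obtain ⟨⟨i, a⟩, rfl⟩ := e.surjective a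
    obtain ⟨⟨j, b⟩, rfl⟩ := e.surjective b
    rw [Matrix.sum_apply]
    simp only [W, Matrix.mul_apply, Matrix.conjTranspose_apply, Matrix.of_apply]
    rw [← Fintype.sum_sigma' (fun s x => (if e ⟨i, a⟩ = e ⟨s, x⟩ then (1 : ℂ) else 0) *
      star (if e ⟨j, b⟩ = e ⟨s, x⟩ then (1 : ℂ) else 0))]
    simp [Matrix.one_apply, apply_ite, eq_comm]
    split_ifs with h
    · simpa using h
    · simpa using h
  let Y : Fin n → Matrix (Fin m) (Fin m) ℂ :=
    fun j => ∑ i, W i * X i j * (W i)ᴴ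
  let VV : Matrix (Fin m) (Fin k) ℂ := ∑ i, W i * V i
  have hWV : ∀ i, (W i)ᴴ * VV = V i := fun i => by
    simp only [VV, Matrix.mul_sum, ← Matrix.mul_assoc]
    rw [Finset.sum_eq_single i (fun b _ hb => by rw [hW0 i b hb.symm, Matrix.zero_mul])
      (by simp), hW1, Matrix.one_mul]
  have hVW : ∀ i, VVᴴ * W i = (V i)ᴴ := fun i => by
    rw [← hWV i, Matrix.conjTranspose_mul, Matrix.conjTranspose_conjTranspose]
  have hVV : VVᴴ * VV = 1 := by
    rw [← hV]
    conv_lhs => rw [show VV = ∑ i, W i * V i from rfl]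
    rw [Matrix.mul_sum]
    refine Finset.sum_congr rfl fun i _ => ?_
    rw [← Matrix.mul_assoc, ← hVW i]
  have hYh : ∀ j, (Y j).IsHermitian := fun j =>
    isSelfAdjoint_sum _ fun i _ => Matrix.isHermitian_mul_mul_conjTranspose (W i) (hXherm i j)
  have hYW : ∀ i j, Y j * W i = W i * X i j := fun i j => by
    simp only [Y, Matrix.sum_mul, Matrix.mul_assoc]
    rw [Finset.sum_eq_single i (fun b _ hb => by rw [hW0 b i hb]; simp) (by simp), hW1,
      Matrix.mul_one]
  have hfY : (evalM f Y).PosSemidef := by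
    have hs := Matrix.posSemidef_sum Finset.univ (fun i _ =>
      psd_conj (fun a b => FreeAlgebra.lift ℂ (X i) (f a b)) (W i)ᴴ (hX i))
    refine Eq.mp (congrArg Matrix.PosSemidef ?_) hs
    symm
    ext ⟨a, b⟩ ⟨c, c2⟩
    rw [Matrix.sum_apply]
    simp only [evalM, Matrix.of_apply]
    have key : FreeAlgebra.lift ℂ Y (f a c) =
        ∑ i, (W i)ᴴᴴ * FreeAlgebra.lift ℂ (X i) (f a c) * (W i)ᴴ := by
      conv_lhs => rw [← Matrix.mul_one (FreeAlgebra.lift ℂ Y (f a c)), ← hWs, Matrix.mul_sum]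
      refine Finset.sum_congr rfl fun i _ => ?_
      rw [← Matrix.mul_assoc, lift_intertwine Y (X i) (W i) (hYW i),
        Matrix.conjTranspose_conjTranspose]
    rw [key, Matrix.sum_apply]
  have hfin := psd_compress f hconv Y VV hVV hYh hfY
  convert hfin using 3 with j
  simp only [Y, Matrix.mul_sum, Matrix.sum_mul]
  refine Finset.sum_congr rfl fun i _ => ?_
  rw [← hVW i]
  simp only [Matrix.mul_assoc]
  rw [hWV i]
end
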